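/- For every complex number q with |q| < 1 and every complex number x, the identity 1 + 2·∑_{n=1}^∞ T_{2n}(x/2)·q^{n²} = (∏_{m=1}^∞ (1 − q^{2m})) · ∏_{m=1}^∞ ((1 − q^{2m−1})² + x²·q^{2m−1}) holds, the infinite products converging absolutely. -/

import Mathlib

open Filter Topology

noncomputable def qPoch (p : ℂ) (k : ℕ) : ℂ := ∏ i ∈ Finset.range k, (1 - p ^ (i + 1))

noncomputable def rInv (p : ℂ) (k : ℤ) : ℂ := if 0 ≤ k then (qPoch p k.toNat)⁻¹ else 0

lemma one_sub_pow_ne {p : ℂ} (hp : ‖p‖ < 1) (i : ℕ) : 1 - p ^ (i + 1) ≠ 0 := by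
  intro h
  have h1 : p ^ (i + 1) = 1 := (sub_eq_zero.mp h).symm
  have h2 : ‖p‖ ^ (i + 1) < 1 := pow_lt_one₀ (norm_nonneg _) hp (by omega)
  rw [← norm_pow, h1] at h2
  simp at h2

lemma qPoch_ne {p : ℂ} (hp : ‖p‖ < 1) (k : ℕ) : qPoch p k ≠ 0 :=
  Finset.prod_ne_zero_iff.mpr fun i _ => one_sub_pow_ne hp i

lemma qPoch_succ (p : ℂ) (k : ℕ) : qPoch p (k + 1) = qPoch p k * (1 - p ^ (k + 1)) := by
  simp [qPoch, Finset.prod_range_succ]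

lemma rInv_rec {p : ℂ} (hp : ‖p‖ < 1) (k : ℤ) :
    rInv p k = (1 - p ^ (k + 1)) * rInv p (k + 1) := by
  rcases lt_trichotomy k (-1) with h | h | h
  · simp [rInv, show ¬ (0 ≤ k) by omega, show ¬ (0 ≤ k + 1) by omega]
  · subst h; simp [rInv]
  · obtain ⟨n, rfl⟩ := Int.eq_ofNat_of_zero_le (show 0 ≤ k by omega)
    have e : ((n : ℤ) + 1).toNat = n + 1 := by omega
    have e2 : (0 : ℤ) ≤ (n : ℤ) + 1 := by omega
    have h1 := one_sub_pow_ne hp n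
    have h2 := qPoch_ne hp n
    have e3 : p ^ ((n : ℤ) + 1) = p ^ (n + 1) := by norm_cast
    simp only [rInv, e, e2, if_true, qPoch_succ, e3, Int.toNat_natCast, Int.natCast_nonneg]
    field_simp

lemma summable_pow_succ {p : ℂ} (hp : ‖p‖ < 1) : Summable fun i : ℕ => ‖-p ^ (i + 1)‖ := by
  simp only [norm_neg, norm_pow]
  exact (summable_nat_add_iff 1).mpr (summable_geometric_of_lt_one (norm_nonneg _) hp)

lemma mult_poch {p : ℂ} (hp : ‖p‖ < 1) : Multipliable fun i : ℕ => 1 - p ^ (i + 1) := by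
  simpa [sub_eq_add_neg] using multipliable_one_add_of_summable (summable_pow_succ hp)

lemma tprod_poch_ne {p : ℂ} (hp : ‖p‖ < 1) : ∏' i : ℕ, (1 - p ^ (i + 1)) ≠ 0 := by
  have := tprod_one_add_ne_zero_of_summable (f := fun i : ℕ => -p ^ (i + 1))
    (fun i => by simpa [sub_eq_add_neg] using one_sub_pow_ne hp i) (summable_pow_succ hp)
  simpa [sub_eq_add_neg] using this

lemma tendsto_qPoch {p : ℂ} (hp : ‖p‖ < 1) :
    Tendsto (qPoch p) atTop (𝓝 (∏' i : ℕ, (1 - p ^ (i + 1)))) :=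
  (mult_poch hp).tendsto_prod_tprod_nat

lemma bounded_qPoch {p : ℂ} (hp : ‖p‖ < 1) : ∃ C, ∀ k, ‖qPoch p k‖ ≤ C := by
  obtain ⟨C, hC⟩ := (Metric.isBounded_range_of_tendsto _ (tendsto_qPoch hp)).exists_norm_le
  exact ⟨C, fun k => hC _ ⟨k, rfl⟩⟩

lemma bounded_rInv {p : ℂ} (hp : ‖p‖ < 1) : ∃ C, 0 ≤ C ∧ ∀ k, ‖rInv p k‖ ≤ C := by
  obtain ⟨C, hC⟩ := (Metric.isBounded_range_of_tendsto _
    ((tendsto_qPoch hp).inv₀ (tprod_poch_ne hp))).exists_norm_le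
  have h0 : 0 ≤ C := (norm_nonneg _).trans (hC _ ⟨0, rfl⟩)
  refine ⟨C, h0, fun k => ?_⟩
  unfold rInv
  split_ifs
  · exact hC _ ⟨_, rfl⟩
  · simpa using h0

lemma tendsto_rInv {p : ℂ} (hp : ‖p‖ < 1) (n : ℤ) :
    Tendsto (fun N : ℕ => rInv p (N + n)) atTop (𝓝 (∏' i : ℕ, (1 - p ^ (i + 1)))⁻¹) := by
  have h1 := (tendsto_qPoch hp).inv₀ (tprod_poch_ne hp)
  have h2 : Tendsto (fun N : ℕ => ((N : ℤ) + n).toNat) atTop atTop := by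
    refine tendsto_atTop.mpr fun b => ?_
    filter_upwards [eventually_ge_atTop (b + n.natAbs)] with N hN
    omega
  refine (h1.comp h2).congr' ?_
  filter_upwards [eventually_ge_atTop n.natAbs] with N hN
  simp [rInv, show (0 : ℤ) ≤ N + n by omega]

noncomputable def fterm (q z : ℂ) (N : ℕ) (n : ℤ) : ℂ :=
  qPoch (q ^ 2) (2 * N) * rInv (q ^ 2) (N + -n) * rInv (q ^ 2) (N + n) * (q ^ (n ^ 2) * z ^ n)

lemma fterm_rec {q z : ℂ} (hq : ‖q‖ < 1) (hq0 : q ≠ 0) (hz : z ≠ 0) (N : ℕ) (n : ℤ) :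
    fterm q z (N + 1) n = (1 + (q ^ (2 * N + 1)) ^ 2) * fterm q z N n
      + q ^ (2 * N + 1) * z * fterm q z N (n - 1)
      + q ^ (2 * N + 1) * z⁻¹ * fterm q z N (n + 1) := by
  have hp : ‖q ^ 2‖ < 1 := by
    rw [norm_pow]; exact pow_lt_one₀ (norm_nonneg _) hq (by norm_num)
  have hp0 : q ^ 2 ≠ 0 := pow_ne_zero _ hq0
  unfold fterm
  rw [show 2 * (N + 1) = 2 * N + 1 + 1 by ring, qPoch_succ, qPoch_succ]
  push_cast
  have a1 := rInv_rec hp (N + -n)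
  have a0 := rInv_rec hp (N + -n - 1)
  have b1 := rInv_rec hp (N + n)
  have b0 := rInv_rec hp (N + n - 1)
  rw [show (N : ℤ) + 1 + -n = N + -n + 1 by ring, show (N : ℤ) + 1 + n = N + n + 1 by ring,
    show (N : ℤ) + -(n - 1) = N + -n + 1 by ring, show (N : ℤ) + (n - 1) = N + n - 1 by ring,
    show (N : ℤ) + -(n + 1) = N + -n - 1 by ring, show (N : ℤ) + (n + 1) = N + n + 1 by ring]
  rw [sub_add_cancel] at a0 b0
  rw [a0, b0, a1, b1]
  generalize rInv (q ^ 2) (N + -n + 1) = R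
  generalize rInv (q ^ 2) (N + n + 1) = S
  generalize qPoch (q ^ 2) (2 * N) = P
  have c1 : q ^ ((n - 1) ^ 2) = q ^ (n ^ 2) * (q ^ n)⁻¹ ^ 2 * q := by
    rw [show (n - 1) ^ 2 = n ^ 2 + (-n) + (-n) + 1 by ring, zpow_add₀ hq0, zpow_add₀ hq0,
      zpow_add₀ hq0, zpow_neg, zpow_one]; ring
  have c2 : q ^ ((n + 1) ^ 2) = q ^ (n ^ 2) * (q ^ n) ^ 2 * q := by
    rw [show (n + 1) ^ 2 = n ^ 2 + n + n + 1 by ring, zpow_add₀ hq0, zpow_add₀ hq0,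
      zpow_add₀ hq0, zpow_one]; ring
  have c3 : z ^ (n - 1) = z ^ n * z⁻¹ := by rw [zpow_sub₀ hz, zpow_one]; rfl
  have c4 : z ^ (n + 1) = z ^ n * z := by rw [zpow_add₀ hz, zpow_one]
  have e : (q ^ 2) ^ n = (q ^ n) ^ 2 := by
    rw [← zpow_natCast, ← zpow_natCast, ← zpow_mul, ← zpow_mul, mul_comm]
  have hqn : q ^ n ≠ 0 := zpow_ne_zero _ hq0
  rw [c1, c2, c3, c4]
  simp only [zpow_add₀ hp0, zpow_neg, zpow_one, zpow_natCast, e]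
  generalize q ^ (n ^ 2) = A
  generalize z ^ n = B
  rw [show (q ^ 2) ^ N = (q ^ N) ^ 2 by ring, show q ^ (2 * N + 1) = (q ^ N) ^ 2 * q by ring,
    show (q ^ 2) ^ (2 * N + 1) = (q ^ N) ^ 4 * q ^ 2 by ring,
    show (q ^ 2) ^ (2 * N + 1 + 1) = (q ^ N) ^ 4 * q ^ 4 by ring]
  generalize q ^ N = M
  generalize q ^ n = y at *
  field_simp
  ring

lemma fterm_hasSum {q z : ℂ} (hq : ‖q‖ < 1) (hq0 : q ≠ 0) (hz : z ≠ 0) (N : ℕ) :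
    HasSum (fterm q z N) (∏ m ∈ Finset.range N,
      ((1 + z * q ^ (2 * m + 1)) * (1 + z⁻¹ * q ^ (2 * m + 1)))) := by
  induction N with
  | zero =>
    have : fterm q z 0 0 = 1 := by simp [fterm, rInv, qPoch]
    simp only [Finset.range_zero, Finset.prod_empty]
    rw [← this]
    refine hasSum_single 0 fun n hn => ?_
    rcases lt_or_gt_of_ne hn with h | h
    · simp [fterm, rInv, show ¬ (0 ≤ n) by omega]
    · simp [fterm, rInv, show ¬ (n ≤ 0) by omega]
  | succ N ih =>
    have h1 := (Equiv.subRight (1 : ℤ)).hasSum_iff.mpr ih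
    have h2 := (Equiv.addRight (1 : ℤ)).hasSum_iff.mpr ih
    have h := ((ih.mul_left (1 + (q ^ (2 * N + 1)) ^ 2)).add
      (h1.mul_left (q ^ (2 * N + 1) * z))).add (h2.mul_left (q ^ (2 * N + 1) * z⁻¹))
    rw [Finset.prod_range_succ, funext (fterm_rec hq hq0 hz N)]
    generalize (∏ m ∈ Finset.range N,
      ((1 + z * q ^ (2 * m + 1)) * (1 + z⁻¹ * q ^ (2 * m + 1)))) = W at h ⊢
    have e : W * ((1 + z * q ^ (2 * N + 1)) * (1 + z⁻¹ * q ^ (2 * N + 1))) =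
        (1 + (q ^ (2 * N + 1)) ^ 2) * W + q ^ (2 * N + 1) * z * W
          + q ^ (2 * N + 1) * z⁻¹ * W := by
      field_simp
      ring
    rw [e]
    exact h

lemma theta_summable {q : ℂ} (hq : ‖q‖ < 1) (hq0 : q ≠ 0) (t : ℂ) :
    Summable fun n : ℤ => q ^ (n ^ 2) * Complex.exp (2 * t * Complex.I) ^ n := by
  have hpi : (Real.pi : ℂ) ≠ 0 := by exact_mod_cast Real.pi_ne_zero
  have h := (summable_jacobiTheta₂_term_iff (t / Real.pi)
    (-Complex.I * Complex.log q / Real.pi)).mpr (by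
      rw [Complex.div_ofReal_im]
      simp only [neg_mul, Complex.neg_im, Complex.I_mul_im, Complex.log_re]
      exact div_pos (neg_pos.mpr (Real.log_neg (norm_pos_iff.mpr hq0) hq)) Real.pi_pos)
  refine h.congr fun n => ?_
  rw [jacobiTheta₂_term, Complex.exp_add, mul_comm]
  congr 1
  · conv_rhs => rw [← Complex.exp_log hq0]
    rw [← Complex.exp_int_mul]
    congr 1
    push_cast
    field_simp
    rw [Complex.I_sq]; ring
  · rw [← Complex.exp_int_mul]
    congr 1
    field_simp

lemma jtp {q : ℂ} (hq : ‖q‖ < 1) (hq0 : q ≠ 0) (t : ℂ)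
    (z : ℂ) (hz : z = Complex.exp (2 * t * Complex.I))
    (hm : Multipliable fun m : ℕ => (1 + z * q ^ (2 * m + 1)) * (1 + z⁻¹ * q ^ (2 * m + 1))) :
    ∑' n : ℤ, q ^ (n ^ 2) * z ^ n = (∏' i : ℕ, (1 - (q ^ 2) ^ (i + 1))) *
      ∏' m : ℕ, ((1 + z * q ^ (2 * m + 1)) * (1 + z⁻¹ * q ^ (2 * m + 1))) := by
  have hp : ‖q ^ 2‖ < 1 := by
    rw [norm_pow]; exact pow_lt_one₀ (norm_nonneg _) hq (by norm_num)
  have hz0 : z ≠ 0 := hz ▸ Complex.exp_ne_zero _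
  have hs := theta_summable hq hq0 t
  rw [← hz] at hs
  obtain ⟨C, hC⟩ := bounded_qPoch hp
  obtain ⟨D, hD0, hD⟩ := bounded_rInv hp
  have hC0 : 0 ≤ C := (norm_nonneg _).trans (hC 0)
  have hne := tprod_poch_ne hp
  have hT := tendsto_qPoch hp
  have key := tendsto_tsum_of_dominated_convergence (𝓕 := atTop) (f := fterm q z)
    (g := fun n : ℤ => (∏' i : ℕ, (1 - (q ^ 2) ^ (i + 1))) * (∏' i : ℕ, (1 - (q ^ 2) ^ (i + 1)))⁻¹
      * (∏' i : ℕ, (1 - (q ^ 2) ^ (i + 1)))⁻¹ * (q ^ (n ^ 2) * z ^ n))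
    (hs.norm.mul_left (C * D * D))
    (fun n => (((hT.comp (tendsto_id.const_mul_atTop' two_pos)).mul
      (tendsto_rInv hp (-n))).mul (tendsto_rInv hp n)).mul_const _)
    (Eventually.of_forall fun N n => by
      unfold fterm
      rw [norm_mul, norm_mul, norm_mul]
      gcongr
      · exact hC _
      · exact hD _
      · exact hD _)
  simp only [(fterm_hasSum hq hq0 hz0 _).tsum_eq] at key
  have h2 := tendsto_nhds_unique key hm.tendsto_prod_tprod_nat
  rw [← h2, tsum_mul_left]
  field_simp

theorem stmt12 (q x : ℂ) (hq : ‖q‖ < 1) :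
    Multipliable (fun m : ℕ => (1 : ℂ) - q ^ (2 * (m + 1))) ∧
    Multipliable (fun m : ℕ => (1 - q ^ (2 * (m + 1) - 1)) ^ 2 + x ^ 2 * q ^ (2 * (m + 1) - 1)) ∧
    1 + 2 * ∑' n : ℕ,
        (Polynomial.Chebyshev.T ℂ (2 * ((n : ℤ) + 1))).eval (x / 2) * q ^ ((n + 1) ^ 2) =
      (∏' m : ℕ, (1 - q ^ (2 * (m + 1)))) *
        ∏' m : ℕ, ((1 - q ^ (2 * (m + 1) - 1)) ^ 2 + x ^ 2 * q ^ (2 * (m + 1) - 1)) := by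
  have hp : ‖q ^ 2‖ < 1 := by
    rw [norm_pow]; exact pow_lt_one₀ (norm_nonneg _) hq (by norm_num)
  have hexp : ∀ m : ℕ, 2 * (m + 1) - 1 = 2 * m + 1 := fun m => by omega
  simp only [hexp]
  have hM1 := mult_poch hp
  have hM2 : Multipliable
      (fun m : ℕ => (1 - q ^ (2 * m + 1)) ^ 2 + x ^ 2 * q ^ (2 * m + 1)) := by
    have s1 : Summable fun m : ℕ => ‖q‖ ^ m :=
      summable_geometric_of_lt_one (norm_nonneg _) hq
    have := multipliable_one_add_of_summable
      (f := fun m : ℕ => (x ^ 2 - 2 + q ^ (2 * m + 1)) * q ^ (2 * m + 1)) (by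
        refine Summable.of_nonneg_of_le (fun _ => norm_nonneg _) (fun m => ?_)
          (s1.mul_left (‖x ^ 2 - 2‖ + 1))
        rw [norm_mul]
        have h1 : ‖q ^ (2 * m + 1)‖ ≤ 1 := by
          rw [norm_pow]; exact pow_le_one₀ (norm_nonneg _) hq.le
        have h2 : ‖q ^ (2 * m + 1)‖ ≤ ‖q‖ ^ m := by
          rw [norm_pow]; exact pow_le_pow_of_le_one (norm_nonneg _) hq.le (by omega)
        gcongr
        exact (norm_add_le _ _).trans (by gcongr))
    refine this.congr fun m => ?_
    ring
  simp only [pow_mul q 2 (_ + 1)]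
  refine ⟨hM1, hM2, ?_⟩
  by_cases hq0 : q = 0
  · subst hq0; simp
  obtain ⟨t, ht⟩ := Complex.cos_surjective (x / 2)
  obtain ⟨z, hz⟩ : ∃ z, z = Complex.exp (2 * t * Complex.I) := ⟨_, rfl⟩
  have hz0 : z ≠ 0 := hz ▸ Complex.exp_ne_zero _
  have hzi : z⁻¹ = Complex.exp (-(2 * t * Complex.I)) := by rw [hz, Complex.exp_neg]
  have hx : x ^ 2 = z + 2 + z⁻¹ := by
    have h1 : x = 2 * Complex.cos t := by rw [ht]; ring
    have h2 : 2 * Complex.cos (2 * t) = z + z⁻¹ := by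
      rw [hzi, hz, Complex.two_cos]; ring_nf
    rw [Complex.cos_two_mul] at h2
    rw [h1]; linear_combination h2
  have hfac : ∀ m : ℕ, (1 - q ^ (2 * m + 1)) ^ 2 + x ^ 2 * q ^ (2 * m + 1)
      = (1 + z * q ^ (2 * m + 1)) * (1 + z⁻¹ * q ^ (2 * m + 1)) := fun m => by
    rw [hx]; field_simp; ring
  simp only [hfac] at hM2 ⊢
  rw [← jtp hq hq0 t z hz hM2]
  have hs := theta_summable hq hq0 t
  rw [← hz] at hs
  have h1 := hs.hasSum.nat_add_neg
  have h2 := (hasSum_nat_add_iff' 1).mpr h1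
  have h3 : ∀ n : ℕ, q ^ (((n + 1 : ℕ) : ℤ) ^ 2) * z ^ ((n + 1 : ℕ) : ℤ)
      + q ^ ((-((n + 1 : ℕ) : ℤ)) ^ 2) * z ^ (-((n + 1 : ℕ) : ℤ)) =
      2 * ((Polynomial.Chebyshev.T ℂ (2 * ((n : ℤ) + 1))).eval (x / 2) * q ^ ((n + 1) ^ 2)) := by
    intro n
    rw [← ht, Polynomial.Chebyshev.T_complex_cos, neg_sq,
      show q ^ (((n + 1 : ℕ) : ℤ) ^ 2) = q ^ ((n + 1) ^ 2) by norm_cast, ← mul_assoc,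
      Complex.two_cos, zpow_neg, ← inv_zpow, hzi, hz, ← Complex.exp_int_mul,
      ← Complex.exp_int_mul]
    push_cast
    ring_nf
  simp only [h3] at h2
  rw [← tsum_mul_left, h2.tsum_eq]
  simp
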